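/- arXiv:hep-lat/0202025 — 5 statements merged into one kernel-verified Lean document; each statement's English description precedes it below -/
import Mathlib

section
/- Under the hypotheses of the preceding setting — Q an n×n invertible Hermitian complex matrix with spectrum in [−b, −a] ∪ [a, b] (0 < a ≤ b), v ∈ ℂⁿ nonzero, ω₁, …, ω_m ≥ 0, 0 < τ₁ ≤ … ≤ τ_m with |sign(t) − Σᵢ ωᵢ t/(t² + τᵢ)| ≤ ε/2 on [−b, −a] ∪ [a, b], and x_k = Σᵢ ωᵢ Q V̂(T̂ + τᵢI)^{−1} e₁ ‖v‖₂ the k-step multishift-CG/PFE approximation built from a Lanczos relation Q²V̂ = V̂T̂ + β̂ v̂ e_kᵀ (V̂ with orthonormal columns, first column v/‖v‖₂, T̂ real symmetric tridiagonal with positive subdiagonal, v̂ a unit vector orthogonal to the columns of V̂) — if in addition the first residual satisfies ‖r_k^1‖₂ = ‖v − (Q² + τ₁I)V̂(T̂+τ₁I)^{−1}e₁‖v‖₂‖₂ ≤ ε/(2 + ε), with 0 < ε ≤ 2, then ‖sign(Q)v − x_k‖₂ ≤ ε. -/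
/-!
The Lanczos relation makes every shifted residual a multiple of one vector, with coefficient the
corner entry `c / det (T + τᵢ)` of `(T + τᵢ)⁻¹`. The cofactor `c` is, up to sign, a product of
subdiagonal entries of `T`, so it does not depend on the shift, and `T = Vᴴ Q² V ≥ 0` makes the
determinant positive and increasing in the shift. Hence `rᵢ = ρᵢ r₁` with `ρᵢ ∈ [0, 1]`.

Writing `g(t) = ∑ ωᵢ t / (t² + τᵢ)` and `h(t) = ∑ ωᵢ ρᵢ t / (t² + τᵢ)`, the error is
`(sign - g)(Q) v + h(Q) r₁`. All terms of `g(t)` have the sign of `t`, so damping them by the `ρᵢ`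
gives `|h| ≤ |g| ≤ 1 + ε / 2` on the spectrum of `Q`, while `|sign - g| ≤ ε / 2` there.
-/

open Matrix Polynomial

/-- The Euclidean (l2) norm on `ℂⁿ`. -/
noncomputable def e2norm {n : ℕ} (x : Fin n → ℂ) : ℝ :=
  Real.sqrt (∑ i, ‖x i‖ ^ 2)

lemma e2norm_eq_norm {n : ℕ} (x : Fin n → ℂ) : e2norm x = ‖WithLp.toLp 2 x‖ :=
  (EuclideanSpace.norm_eq _).symm

lemma map_matrix_inv {K L l : Type*} [Field K] [Field L] [Fintype l] [DecidableEq l]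
    (f : K →+* L) (A : Matrix l l K) : A⁻¹.map f = (A.map f)⁻¹ := by
  have hadj : A.adjugate.map f = (A.map f).adjugate := f.map_adjugate A
  have hdet : f A.det = (A.map f).det := f.map_det A
  rw [inv_def, inv_def, Ring.inverse_eq_inv', Ring.inverse_eq_inv', ← hadj, ← hdet, ← map_inv₀]
  exact Matrix.map_smul' f _ _ (map_mul f)

lemma map_add_smul_one {K L l : Type*} [Semiring K] [Semiring L] [DecidableEq l]
    (f : K →+* L) (A : Matrix l l K) (σ : K) :
    (A + σ • 1).map f = A.map f + f σ • 1 := by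
  rw [Matrix.map_add f (map_add f), Matrix.map_smul' f σ _ (map_mul f),
    Matrix.map_one f (map_zero f) (map_one f)]

section Hessenberg

variable {R : Type*} {k : ℕ}

/-- Upper Hessenberg matrices, whose entries below the subdiagonal vanish; tridiagonal matrices are
the example of interest. -/
def IsUpperHessenberg [Zero R] (A : Matrix (Fin k) (Fin k) R) : Prop :=
  ∀ i j : Fin k, (j : ℕ) + 1 < i → A i j = 0

variable [CommRing R] {A : Matrix (Fin (k + 1)) (Fin (k + 1)) R}

lemma IsUpperHessenberg.add_smul_one (hA : IsUpperHessenberg A) (σ : R) :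
    IsUpperHessenberg (A + σ • 1) := fun i j hij => by
  have hne : i ≠ j := by rintro rfl; omega
  simp [hA i j hij, hne]

lemma IsUpperHessenberg.adjugate_last_zero (hA : IsUpperHessenberg A) :
    A.adjugate (Fin.last k) 0 = (-1) ^ k * ∏ i : Fin k, A i.succ i.castSucc := by
  have htri : (A.submatrix Fin.succ Fin.castSucc).IsUpperTriangular := fun i j hij =>
    hA _ _ (by simpa using hij)
  simpa [adjugate_fin_succ_eq_det_submatrix] using
    congrArg ((-1) ^ k * ·) (det_of_isUpperTriangular htri)

lemma IsUpperHessenberg.adjugate_add_smul_one_last_zero (hA : IsUpperHessenberg A) (σ : R) :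
    (A + σ • 1).adjugate (Fin.last k) 0 = A.adjugate (Fin.last k) 0 := by
  have hne (i : Fin k) : i.succ ≠ i.castSucc := i.castSucc_lt_succ.ne'
  simp [(hA.add_smul_one σ).adjugate_last_zero, hA.adjugate_last_zero, hne]

end Hessenberg

section FunctionalCalculus

variable {𝕜 n : Type*} [RCLike 𝕜] [Fintype n] [DecidableEq n] {A : Matrix n n 𝕜}

lemma det_cfc (hA : A.IsHermitian) (f : ℝ → ℝ) :
    (hA.cfc f).det = ∏ i, (f (hA.eigenvalues i) : 𝕜) := by
  rw [IsHermitian.cfc, Unitary.conjStarAlgAut_apply, det_mul_right_comm]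
  simp

lemma cfc_sub_eq (hA : A.IsHermitian) (f g : ℝ → ℝ) :
    hA.cfc (f - g) = hA.cfc f - hA.cfc g := by
  simp only [← hA.cfc_eq]
  exact cfc_sub f g A (A.finite_real_spectrum.continuousOn f)
    (A.finite_real_spectrum.continuousOn g)

lemma cfc_add_const_eq (hA : A.IsHermitian) (σ : ℝ) :
    hA.cfc (· + σ) = A + (σ : 𝕜) • 1 := by
  rw [← hA.cfc_eq, cfc_add_const σ (fun t => t) A (A.finite_real_spectrum.continuousOn _)
    hA.isSelfAdjoint, cfc_id' ℝ A]
  simp [Algebra.algebraMap_eq_smul_one]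

lemma det_add_smul_one (hA : A.IsHermitian) (σ : ℝ) :
    (A + (σ : 𝕜) • 1).det = ((∏ i, (hA.eigenvalues i + σ) : ℝ) : 𝕜) := by
  rw [← cfc_add_const_eq hA, det_cfc]
  simp

open scoped Matrix.Norms.L2Operator in
lemma norm_cfc_mulVec_le (hA : A.IsHermitian) {f : ℝ → ℝ} {C : ℝ} (hC : 0 ≤ C)
    (hf : ∀ i, |f (hA.eigenvalues i)| ≤ C) (x : n → 𝕜) :
    ‖WithLp.toLp 2 (hA.cfc f *ᵥ x)‖ ≤ C * ‖WithLp.toLp 2 x‖ := by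
  have hnorm : ‖hA.cfc f‖ ≤ C := by
    rw [IsHermitian.cfc, Unitary.conjStarAlgAut_apply, ← Unitary.coe_star,
      CStarRing.norm_mul_coe_unitary, CStarRing.norm_coe_unitary_mul, l2_opNorm_diagonal]
    exact (pi_norm_le_iff_of_nonneg hC).2 fun i => by simpa using hf i
  exact ((hA.cfc f).l2_opNorm_mulVec (WithLp.toLp 2 x)).trans (by gcongr)

end FunctionalCalculus

section PartialFractions

variable {ι : Type*} [Fintype ι] {ω τ : ι → ℝ}

/-- The partial fraction expansion `∑ ωᵢ t / (t² + τᵢ)` with weights `ω` and shifts `τ`, an odd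
rational approximation to the sign function. -/
noncomputable def pfe (ω τ : ι → ℝ) (t : ℝ) : ℝ :=
  ∑ i, ω i * (t / (t ^ 2 + τ i))

lemma pfe_eq_mul_sum (ω τ : ι → ℝ) (t : ℝ) : pfe ω τ t = t * ∑ i, ω i / (t ^ 2 + τ i) := by
  rw [pfe, Finset.mul_sum]
  exact Finset.sum_congr rfl fun i _ => by ring

lemma abs_pfe_le_abs_pfe {ω' : ι → ℝ} (hω' : 0 ≤ ω') (hle : ω' ≤ ω) (hτ : 0 ≤ τ) (t : ℝ) :
    |pfe ω' τ t| ≤ |pfe ω τ t| := by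
  have hden (i : ι) : 0 ≤ t ^ 2 + τ i := add_nonneg (sq_nonneg t) (hτ i)
  rw [pfe_eq_mul_sum, pfe_eq_mul_sum, abs_mul, abs_mul]
  refine mul_le_mul_of_nonneg_left (abs_le_abs_of_nonneg ?_ ?_) (abs_nonneg t)
  · exact Finset.sum_nonneg fun i _ => div_nonneg (hω' i) (hden i)
  · exact Finset.sum_le_sum fun i _ => div_le_div_of_nonneg_right (hle i) (hden i)

variable {𝕜 n : Type*} [RCLike 𝕜] [Fintype n] [DecidableEq n] {Q : Matrix n n 𝕜}

lemma cfc_pfe (hQ : Q.IsHermitian) (ω τ : ι → ℝ) :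
    hQ.cfc (pfe ω τ) = ∑ i, (ω i : 𝕜) • hQ.cfc (fun t => t / (t ^ 2 + τ i)) := by
  have hpfe : pfe ω τ = ∑ i, fun t => ω i * (t / (t ^ 2 + τ i)) := by
    ext t
    simp [pfe]
  simp only [← hQ.cfc_eq]
  rw [hpfe, cfc_sum_univ _ Q fun i => Q.finite_real_spectrum.continuousOn _]
  refine Finset.sum_congr rfl fun i _ => ?_
  rw [cfc_const_mul (ω i) _ Q (Q.finite_real_spectrum.continuousOn _),
    RCLike.real_smul_eq_coe_smul (K := 𝕜)]

lemma cfc_div_sq_add_mul (hQ : Q.IsHermitian) {σ : ℝ} (hσ : 0 < σ) :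
    hQ.cfc (fun t => t / (t ^ 2 + σ)) * (Q ^ 2 + (σ : 𝕜) • 1) = Q := by
  have hsq : cfc (fun t : ℝ => t ^ 2 + σ) Q = Q ^ 2 + (σ : 𝕜) • 1 := by
    rw [cfc_add_const σ (· ^ 2) Q (Q.finite_real_spectrum.continuousOn _) hQ.isSelfAdjoint,
      cfc_pow_id Q 2 hQ.isSelfAdjoint]
    simp [Algebra.algebraMap_eq_smul_one]
  have hcancel (t : ℝ) : t / (t ^ 2 + σ) * (t ^ 2 + σ) = t := div_mul_cancel₀ t (by positivity)
  rw [← hQ.cfc_eq, ← hsq, ← cfc_mul _ _ Q (Q.finite_real_spectrum.continuousOn _)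
    (Q.finite_real_spectrum.continuousOn _)]
  simpa only [hcancel] using cfc_id' ℝ Q hQ.isSelfAdjoint

lemma cfc_mulVec_sub_sum_eq (hQ : Q.IsHermitian) (f : ℝ → ℝ) (ω : ι → ℝ) (hτ : ∀ i, 0 < τ i)
    {ρ : ι → ℝ} {v r : n → 𝕜} {x : ι → n → 𝕜}
    (hr : ∀ i, v - (Q ^ 2 + (τ i : 𝕜) • 1) *ᵥ x i = (ρ i : 𝕜) • r) :
    hQ.cfc f *ᵥ v - ∑ i, (ω i : 𝕜) • (Q *ᵥ x i) =
      hQ.cfc (f - pfe ω τ) *ᵥ v + hQ.cfc (pfe (ω * ρ) τ) *ᵥ r := by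
  have hQx (i : ι) :
      Q *ᵥ x i = hQ.cfc (fun t => t / (t ^ 2 + τ i)) *ᵥ (v - (ρ i : 𝕜) • r) := by
    rw [← hr i, sub_sub_cancel, mulVec_mulVec, cfc_div_sq_add_mul hQ (hτ i)]
  simp only [hQx, cfc_sub_eq, cfc_pfe, sub_mulVec, sum_mulVec, smul_mulVec, mulVec_sub,
    mulVec_smul, smul_sub, Finset.sum_sub_distrib, Pi.mul_apply, RCLike.ofReal_mul, mul_smul]
  abel

theorem norm_cfc_mulVec_sub_sum_le (hQ : Q.IsHermitian) {f : ℝ → ℝ} (hω : 0 ≤ ω)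
    (hτ : ∀ i, 0 < τ i) {M δ : ℝ} (hM : 0 ≤ M) (hδ : 0 ≤ δ)
    (hfM : ∀ j, |f (hQ.eigenvalues j)| ≤ M)
    (hfδ : ∀ j, |f (hQ.eigenvalues j) - pfe ω τ (hQ.eigenvalues j)| ≤ δ)
    {ρ : ι → ℝ} (hρ : ∀ i, ρ i ∈ Set.Icc 0 1) {v r : n → 𝕜} {x : ι → n → 𝕜}
    (hr : ∀ i, v - (Q ^ 2 + (τ i : 𝕜) • 1) *ᵥ x i = (ρ i : 𝕜) • r) :
    ‖WithLp.toLp 2 (hQ.cfc f *ᵥ v - ∑ i, (ω i : 𝕜) • (Q *ᵥ x i))‖ ≤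
      δ * ‖WithLp.toLp 2 v‖ + (M + δ) * ‖WithLp.toLp 2 r‖ := by
  have hdamped (t : ℝ) : |pfe (ω * ρ) τ t| ≤ |pfe ω τ t| :=
    abs_pfe_le_abs_pfe (fun i => mul_nonneg (hω i) (hρ i).1)
      (fun i => mul_le_of_le_one_right (hω i) (hρ i).2) (fun i => (hτ i).le) t
  have hpfe (j : n) : |pfe (ω * ρ) τ (hQ.eigenvalues j)| ≤ M + δ := by
    have htri := abs_sub_abs_le_abs_sub (pfe ω τ (hQ.eigenvalues j)) (f (hQ.eigenvalues j))
    rw [abs_sub_comm] at htri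
    linarith [hdamped (hQ.eigenvalues j), hfM j, hfδ j]
  rw [cfc_mulVec_sub_sum_eq hQ f ω hτ hr, WithLp.toLp_add]
  exact norm_add_le_of_le (norm_cfc_mulVec_le hQ hδ hfδ v)
    (norm_cfc_mulVec_le hQ (add_nonneg hM hδ) hpfe r)

end PartialFractions

section Lanczos

open scoped ComplexOrder

variable {𝕜 n : Type*} [RCLike 𝕜] {k : ℕ}

lemma exists_inv_last_zero_eq_mul {S : Matrix (Fin (k + 1)) (Fin (k + 1)) 𝕜}
    (hS : S.PosSemidef) (hess : IsUpperHessenberg S) {σ τ : ℝ} (hσ : 0 < σ) (hτ : σ ≤ τ) :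
    ∃ ρ ∈ Set.Icc (0 : ℝ) 1, (S + (τ : 𝕜) • 1)⁻¹ (Fin.last k) 0 =
      ρ * (S + (σ : 𝕜) • 1)⁻¹ (Fin.last k) 0 := by
  let p (s : ℝ) : ℝ := ∏ j, (hS.1.eigenvalues j + s)
  have hμ := hS.eigenvalues_nonneg
  have hp {s : ℝ} (hs : 0 < s) : 0 < p s :=
    Finset.prod_pos fun j _ => add_pos_of_nonneg_of_pos (hμ j) hs
  have hmono : p σ ≤ p τ :=
    Finset.prod_le_prod (fun j _ => add_nonneg (hμ j) hσ.le) fun j _ => by gcongr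
  have hcramer (s : ℝ) :
      (S + (s : 𝕜) • 1)⁻¹ (Fin.last k) 0 = (p s : 𝕜)⁻¹ * S.adjugate (Fin.last k) 0 := by
    rw [inv_def, Matrix.smul_apply, Ring.inverse_eq_inv', hess.adjugate_add_smul_one_last_zero,
      det_add_smul_one hS.1, smul_eq_mul]
  have hpσ : (p σ : 𝕜) ≠ 0 := RCLike.ofReal_ne_zero.2 (hp hσ).ne'
  refine ⟨p σ / p τ, ⟨?_, ?_⟩, ?_⟩
  · exact div_nonneg (hp hσ).le (hp (hσ.trans_le hτ)).le
  · exact div_le_one_of_le₀ hmono (hp (hσ.trans_le hτ)).le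
  · rw [hcramer, hcramer, RCLike.ofReal_div]
    field_simp

variable [Fintype n]

/-- The relations between the outputs of `k + 1` steps of the Lanczos process for `A`: the
orthonormal basis `V`, the compression `S` of `A` to its span, and the next basis vector `w` with
its coefficient `β`. The starting vector, the shape of `S` and the normalization of `w` are not
recorded. -/
structure IsLanczosDecomposition (A : Matrix n n 𝕜) (V : Matrix n (Fin (k + 1)) 𝕜)
    (S : Matrix (Fin (k + 1)) (Fin (k + 1)) 𝕜) (β : 𝕜) (w : n → 𝕜) : Prop where
  orthonormal : Vᴴ * V = 1
  orthogonal : star w ᵥ* V = 0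
  mul_eq : A * V = V * S + β • vecMulVec w (Pi.single (Fin.last k) 1)

/-- The CG iterate `c V (S + σ)⁻¹ e₁` for the system with shift `σ`, where `c` is the norm of the
right-hand side. -/
noncomputable def shiftedIterate (V : Matrix n (Fin (k + 1)) 𝕜)
    (S : Matrix (Fin (k + 1)) (Fin (k + 1)) 𝕜) (c σ : 𝕜) : n → 𝕜 :=
  c • (V *ᵥ ((S + σ • 1)⁻¹ *ᵥ Pi.single 0 1))

variable {A Q : Matrix n n 𝕜} {V : Matrix n (Fin (k + 1)) 𝕜}
  {S : Matrix (Fin (k + 1)) (Fin (k + 1)) 𝕜} {β c : 𝕜} {w v : n → 𝕜}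

lemma IsLanczosDecomposition.eq_conjTranspose_mul_mul (h : IsLanczosDecomposition A V S β w) :
    S = Vᴴ * A * V := by
  have horth : Vᴴ *ᵥ w = 0 := by simpa [star_vecMul] using congrArg star h.orthogonal
  rw [Matrix.mul_assoc, h.mul_eq, Matrix.mul_add, ← Matrix.mul_assoc, h.orthonormal,
    Matrix.one_mul, Matrix.mul_smul, mul_vecMulVec, horth, zero_vecMulVec, smul_zero, add_zero]

lemma IsLanczosDecomposition.posSemidef (h : IsLanczosDecomposition A V S β w)
    (hA : A.PosSemidef) : S.PosSemidef :=
  h.eq_conjTranspose_mul_mul ▸ hA.conjTranspose_mul_mul_same V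

variable [DecidableEq n]

lemma IsLanczosDecomposition.residual_eq (h : IsLanczosDecomposition A V S β w)
    (hv : c • (V *ᵥ Pi.single 0 1) = v) {σ : 𝕜} (hdet : IsUnit (S + σ • 1).det) :
    v - (A + σ • 1) *ᵥ shiftedIterate V S c σ =
      (S + σ • 1)⁻¹ (Fin.last k) 0 • -((c * β) • w) := by
  have hshift : (A + σ • 1) * V =
      V * (S + σ • 1) + β • vecMulVec w (Pi.single (Fin.last k) 1) := by
    rw [Matrix.add_mul, h.mul_eq, Matrix.mul_add, smul_mul, Matrix.mul_smul, Matrix.one_mul,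
      Matrix.mul_one]
    abel
  have hsolve : (V * (S + σ • 1)) *ᵥ ((S + σ • 1)⁻¹ *ᵥ Pi.single 0 1) = V *ᵥ Pi.single 0 1 := by
    rw [mulVec_mulVec, Matrix.mul_assoc, mul_nonsing_inv _ hdet, Matrix.mul_one]
  have hcorner : vecMulVec w (Pi.single (Fin.last k) 1) *ᵥ ((S + σ • 1)⁻¹ *ᵥ Pi.single 0 1) =
      (S + σ • 1)⁻¹ (Fin.last k) 0 • w := by
    simp [vecMulVec_mulVec]
  rw [shiftedIterate, mulVec_smul, mulVec_mulVec, hshift, add_mulVec, hsolve, smul_mulVec, hcorner,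
    smul_add, hv, sub_add_cancel_left, smul_neg, smul_smul, smul_smul, smul_smul]
  ring_nf

lemma IsLanczosDecomposition.exists_residual_eq_smul (h : IsLanczosDecomposition A V S β w)
    (hA : A.PosSemidef) (hS : IsUpperHessenberg S) (hv : c • (V *ᵥ Pi.single 0 1) = v)
    {σ τ : ℝ} (hσ : 0 < σ) (hτ : σ ≤ τ) :
    ∃ ρ ∈ Set.Icc (0 : ℝ) 1, v - (A + (τ : 𝕜) • 1) *ᵥ shiftedIterate V S c τ =
      (ρ : 𝕜) • (v - (A + (σ : 𝕜) • 1) *ᵥ shiftedIterate V S c σ) := by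
  have hpsd := h.posSemidef hA
  have hdet {s : ℝ} (hs : 0 < s) : IsUnit (S + (s : 𝕜) • 1).det :=
    (isUnit_iff_isUnit_det _).1
      (PosDef.posSemidef_add hpsd (PosDef.one.smul (RCLike.ofReal_pos.2 hs))).isUnit
  obtain ⟨ρ, hρ, hinv⟩ := exists_inv_last_zero_eq_mul hpsd hS hσ hτ
  refine ⟨ρ, hρ, ?_⟩
  rw [h.residual_eq hv (hdet hσ), h.residual_eq hv (hdet (hσ.trans_le hτ)), hinv, mul_smul]

theorem multishift_cg_pfe_termination_general {ι : Type*} [Fintype ι] (hQ : Q.IsHermitian)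
    (hL : IsLanczosDecomposition (Q ^ 2) V S β w) (hS : IsUpperHessenberg S)
    (hv : c • (V *ᵥ Pi.single 0 1) = v) {ω τ : ι → ℝ} (hω : ∀ i, 0 ≤ ω i) {i₀ : ι}
    (hτpos : 0 < τ i₀) (hτmin : ∀ i, τ i₀ ≤ τ i) {ε : ℝ} (hε : 0 ≤ ε)
    (hrat : ∀ j, |Real.sign (hQ.eigenvalues j) - pfe ω τ (hQ.eigenvalues j)| ≤ ε / 2)
    (hres : ‖WithLp.toLp 2 (v - (Q ^ 2 + (τ i₀ : 𝕜) • 1) *ᵥ shiftedIterate V S c (τ i₀))‖ ≤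
      ε / (2 + ε) * ‖WithLp.toLp 2 v‖) :
    ‖WithLp.toLp 2 (hQ.cfc Real.sign *ᵥ v -
      ∑ i, (ω i : 𝕜) • (Q *ᵥ shiftedIterate V S c (τ i)))‖ ≤ ε * ‖WithLp.toLp 2 v‖ := by
  have hsq : (Q ^ 2).PosSemidef := by
    simpa [hQ.eq, sq] using posSemidef_conjTranspose_mul_self Q
  choose ρ hρ hr using fun i => hL.exists_residual_eq_smul hsq hS hv hτpos (hτmin i)
  have hsign (t : ℝ) : |Real.sign t| ≤ 1 := by
    rcases Real.sign_apply_eq t with h | h | h <;> simp [h]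
  calc _ ≤ ε / 2 * ‖WithLp.toLp 2 v‖ + (1 + ε / 2) * _ :=
        norm_cfc_mulVec_sub_sum_le hQ hω (fun i => hτpos.trans_le (hτmin i)) zero_le_one
          (by positivity) (fun j => hsign _) hrat hρ hr
    _ ≤ ε / 2 * ‖WithLp.toLp 2 v‖ + (1 + ε / 2) * (ε / (2 + ε) * ‖WithLp.toLp 2 v‖) := by gcongr
    _ = ε * ‖WithLp.toLp 2 v‖ := by field_simp; ring

end Lanczos

/-- Termination criterion for the multishift-CG / PFE method: under the
hypotheses of the multishift-CG setting (rational approximation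
`r(t) = ∑ᵢ ωᵢ t/(t² + τᵢ)` with `|sign(t) - r(t)| ≤ ε/2` on `[-b,-a] ∪ [a,b] ⊇ spec(Q)`,
`ωᵢ ≥ 0`, `0 < τ₁ ≤ … ≤ τ_m`, Lanczos relation `Q² V̂ = V̂ T̂ + β̂ v̂ e_kᵀ` for the normalized
vector `v`, iterates `x_k = ∑ᵢ ωᵢ Q V̂ (T̂ + τᵢ I)⁻¹ e₁ ‖v‖₂`), if the first residual
satisfies `‖r_k^1‖₂ ≤ ε/(2 + ε)` with `0 < ε ≤ 2`, then `‖sign(Q)v − x_k‖₂ ≤ ε`. -/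
theorem multishift_cg_pfe_termination {n k m : ℕ} (hk : 0 < k) (hm : 0 < m)
    (Q : Matrix (Fin n) (Fin n) ℂ) (hQ : Q.IsHermitian) (hQinv : IsUnit Q.det)
    (a b : ℝ) (ha : 0 < a) (hab : a ≤ b)
    (hspec : ∀ i, hQ.eigenvalues i ∈ Set.Icc (-b) (-a) ∪ Set.Icc a b)
    (v : Fin n → ℂ) (hv : v ≠ 0) (hvnorm : e2norm v = 1)
    (ω τ : Fin m → ℝ) (hω : ∀ i, 0 ≤ ω i) (hτpos : ∀ i, 0 < τ i) (hτmono : Monotone τ)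
    (ε : ℝ) (hε : 0 < ε) (hε2 : ε ≤ 2)
    (hrat : ∀ t : ℝ, t ∈ Set.Icc (-b) (-a) ∪ Set.Icc a b →
      |Real.sign t - ∑ i, ω i * (t / (t ^ 2 + τ i))| ≤ ε / 2)
    (V : Matrix (Fin n) (Fin k) ℂ) (hVorth : Vᴴ * V = 1)
    (hV1 : V *ᵥ Pi.single (⟨0, hk⟩ : Fin k) 1 = (e2norm v : ℂ)⁻¹ • v)
    (T : Matrix (Fin k) (Fin k) ℝ) (hTsym : T.IsHermitian)
    (hTtri : ∀ i j : Fin k, 1 < ((i : ℤ) - (j : ℤ)).natAbs → T i j = 0)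
    (hTsub : ∀ (i : ℕ) (h : i + 1 < k), 0 < T ⟨i + 1, h⟩ ⟨i, Nat.lt_of_succ_lt h⟩)
    (βh : ℝ) (hβ : 0 < βh)
    (vh : Fin n → ℂ) (hvh : e2norm vh = 1) (hvhV : star vh ᵥ* V = 0)
    (hrel : Q ^ 2 * V = V * T.map (algebraMap ℝ ℂ) +
      (βh : ℂ) • vecMulVec vh (Pi.single (⟨k - 1, Nat.sub_lt hk one_pos⟩ : Fin k) 1))
    (xk : Fin m → Fin n → ℂ)
    (hxk : ∀ i, xk i = (e2norm v : ℂ) •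
      (V *ᵥ (((T + τ i • 1)⁻¹.map (algebraMap ℝ ℂ)) *ᵥ Pi.single (⟨0, hk⟩ : Fin k) 1)))
    (rk : Fin m → Fin n → ℂ)
    (hrk : ∀ i, rk i = v - (Q ^ 2 + (τ i : ℂ) • 1) *ᵥ xk i)
    (xsum : Fin n → ℂ)
    (hxsum : xsum = ∑ i, (ω i : ℂ) • (Q *ᵥ xk i))
    (hres : e2norm (rk ⟨0, hm⟩) ≤ ε / (2 + ε)) :
    e2norm ((hQ.cfc Real.sign) *ᵥ v - xsum) ≤ ε := by
  obtain ⟨k, rfl⟩ := Nat.exists_eq_add_one.2 hk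
  have hS : IsUpperHessenberg (T.map (algebraMap ℝ ℂ)) := fun i j hij => by
    simp [hTtri i j (by omega)]
  have hx (i : Fin m) : xk i = shiftedIterate V (T.map (algebraMap ℝ ℂ)) 1 (τ i) := by
    rw [hxk, map_matrix_inv, map_add_smul_one, hvnorm]
    rfl
  have hv1 : (1 : ℂ) • (V *ᵥ Pi.single 0 1) = v := by
    simpa [hvnorm] using hV1
  simp only [hrk, hx, e2norm_eq_norm] at hvnorm hres
  simpa [hxsum, hx, hvnorm, e2norm_eq_norm] using multishift_cg_pfe_termination_general hQ
    ⟨hVorth, hvhV, hrel⟩ hS hv1 hω (hτpos ⟨0, hm⟩)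
    (fun i => hτmono (Fin.mk_le_of_le_val i.val.zero_le)) hε.le (fun j => hrat _ (hspec j))
    (by simpa [hvnorm] using hres)
end

section
/- Let 0 < a ≤ b and m ≥ 1. For nonnegative integers i, j, let R_{i,j}(D) denote the set of functions g : D → ℝ of the form g(t) = p(t)/q(t) where p, q are real polynomials with deg p ≤ i, deg q ≤ j and q(t) ≠ 0 for all t ∈ D. Suppose s ∈ R_{m−1,m}([1, (b/a)²]) minimizes max_{t ∈ [1, (b/a)²]} |1 − √t · f(t)| over all f ∈ R_{m−1,m}([1, (b/a)²]) (i.e., s is the best relative approximation to t^{−1/2} on [1, (b/a)²] from R_{m−1,m}). Let D' = [−b/a, −1] ∪ [1, b/a]. Then the function r(t) := t·s(t²) minimizes max_{t ∈ D'} |sign(t) − g(t)| over all g ∈ R_{2m−1,2m}(D'); consequently the function t ↦ (t/a)·s((t/a)²) minimizes max_{t ∈ [−b,−a]∪[a,b]} |sign(t) − g(t)| over all g ∈ R_{2m−1,2m}([−b,−a]∪[a,b]). -/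
/-!
Symmetrization turns an arbitrary competitor into an odd one without increasing the error. Let
`g = P / Q` be a rational function on `-K ∪ K`. The sign function is odd, so `g t` and `-g (-t)`
both approximate it at `t`, and so does every point between them. If `Q t` and `Q (-t)` have the
same sign, the mediant `(P t - P (-t)) / (Q t + Q (-t))`, that is, (odd part of `P`) / (even part
of `Q`), is such a point. If they have opposite signs, multiply `P` and `Q` by `X` first: the
degrees go up by one, but the parts that matter do not. The resulting competitor is
`t * f (t ^ 2)`, and the sign error of such a function at `t` is the relative error of `f` as an
approximation of the inverse square root at `t ^ 2`.
-/

open Polynomial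

/-- `IsRatOn i j D g` : the function `g : ℝ → ℝ` agrees on `D` with a rational function
`p/q` where `deg p ≤ i`, `deg q ≤ j` and `q` has no zero on `D`. This is membership in the
class `R_{i,j}(D)` of rational functions of type `(i, j)` on `D`. -/
def IsRatOn (i j : ℕ) (D : Set ℝ) (g : ℝ → ℝ) : Prop :=
  ∃ p q : Polynomial ℝ, p.natDegree ≤ i ∧ q.natDegree ≤ j ∧
    (∀ t ∈ D, q.eval t ≠ 0) ∧ ∀ t ∈ D, g t = p.eval t / q.eval t

lemma natDegree_X_mul_le_succ {R : Type*} [Semiring R] {P : R[X]} {n : ℕ}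
    (hP : P.natDegree ≤ n) : (X * P).natDegree ≤ n + 1 :=
  (natDegree_mul_le_of_le natDegree_X_le hP).trans_eq (add_comm 1 n)

namespace IsRatOn

variable {i j k : ℕ} {D D' : Set ℝ} {g : ℝ → ℝ}

lemma continuousOn (hg : IsRatOn i j D g) : ContinuousOn g D := by
  obtain ⟨p, q, -, -, hq, hg⟩ := hg
  exact (p.continuous.continuousOn.div q.continuous.continuousOn hq).congr hg

lemma comp_eval (hg : IsRatOn i j D g) {r : ℝ[X]} (hr : r.natDegree ≤ k)
    (hD : Set.MapsTo (fun t => r.eval t) D' D) :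
    IsRatOn (k * i) (k * j) D' (fun t => g (r.eval t)) := by
  obtain ⟨p, q, hp, hq, hq₀, hg⟩ := hg
  have hdeg {f : ℝ[X]} {n : ℕ} (hf : f.natDegree ≤ n) : (f.comp r).natDegree ≤ k * n :=
    natDegree_comp_le.trans ((Nat.mul_le_mul hf hr).trans_eq (mul_comm n k))
  refine ⟨p.comp r, q.comp r, hdeg hp, hdeg hq, fun t ht => ?_, fun t ht => ?_⟩
  · rw [eval_comp]
    exact hq₀ _ (hD ht)
  · rw [eval_comp, eval_comp]
    exact hg _ (hD ht)

lemma comp_const_mul (hg : IsRatOn i j D g) (c : ℝ) :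
    IsRatOn i j ((fun t => c * t) ⁻¹' D) (fun t => g (c * t)) := by
  have hD : Set.MapsTo (fun t => (C c * X).eval t) ((fun t => c * t) ⁻¹' D) D := by
    simp [Set.MapsTo]
  simpa only [one_mul, eval_mul, eval_C, eval_X] using
    hg.comp_eval ((natDegree_C_mul_le c X).trans natDegree_X_le) hD

lemma id_mul (hg : IsRatOn i j D g) : IsRatOn (i + 1) j D (fun t => t * g t) := by
  obtain ⟨p, q, hp, hq, hq₀, hg⟩ := hg
  refine ⟨X * p, q, natDegree_X_mul_le_succ hp, hq, hq₀, fun t ht => ?_⟩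
  simp only [hg t ht, eval_mul, eval_X, mul_div_assoc]

lemma id_mul_comp_sq (hg : IsRatOn i j D g) (hD : Set.MapsTo (fun t => t ^ 2) D' D) :
    IsRatOn (2 * i + 1) (2 * j) D' (fun t => t * g (t ^ 2)) := by
  have hD' : Set.MapsTo (fun t => (X ^ 2 : ℝ[X]).eval t) D' D := by simpa using hD
  simpa only [eval_pow, eval_X] using (hg.comp_eval (natDegree_X_pow_le 2) hD').id_mul

end IsRatOn

/-! ### Even and odd parts of a polynomial -/

section EvenOdd

variable {R : Type*} [CommSemiring R]

/-- The polynomial `A` in the decomposition `P(X) = A(X²) + X B(X²)`. It is `A` that is called the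
even part here, not `A(X²)`. -/
noncomputable def evenPart (P : R[X]) : R[X] := contract 2 P

/-- The polynomial `B` in the decomposition `P(X) = A(X²) + X B(X²)`. It is `B` that is called the
odd part here, not `X B(X²)`. -/
noncomputable def oddPart (P : R[X]) : R[X] := contract 2 P.divX

lemma natDegree_contract_le_div {p : ℕ} (hp : p ≠ 0) (P : R[X]) :
    (contract p P).natDegree ≤ P.natDegree / p := by
  refine natDegree_le_iff_coeff_eq_zero.mpr fun n hn => ?_
  rw [coeff_contract hp]
  exact coeff_eq_zero_of_natDegree_lt ((Nat.div_lt_iff_lt_mul hp.bot_lt).mp hn)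

lemma natDegree_evenPart_le {P : R[X]} {n : ℕ} (hP : P.natDegree ≤ 2 * n + 1) :
    (evenPart P).natDegree ≤ n := by
  have := natDegree_contract_le_div two_ne_zero P
  unfold evenPart
  omega

lemma natDegree_oddPart_le {P : R[X]} {n : ℕ} (hP : P.natDegree ≤ 2 * n + 2) :
    (oddPart P).natDegree ≤ n := by
  refine natDegree_evenPart_le ?_
  rw [natDegree_divX_eq_natDegree_tsub_one]
  omega

lemma expand_evenPart_add_X_mul_expand_oddPart (P : R[X]) :
    expand R 2 (evenPart P) + X * expand R 2 (oddPart P) = P := by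
  ext n
  rcases n.even_or_odd' with ⟨k, rfl | rfl⟩
  · have hX : (X * expand R 2 (oddPart P)).coeff (2 * k) = 0 := by
      cases k with
      | zero => simp
      | succ k =>
        rw [Nat.mul_succ, coeff_X_mul, coeff_expand two_pos, if_neg (by omega)]
    rw [coeff_add, hX, add_zero, coeff_expand_mul' two_pos, evenPart, coeff_contract two_ne_zero,
      mul_comm]
  · rw [coeff_add, coeff_X_mul, coeff_expand two_pos, if_neg (by omega), zero_add,
      coeff_expand_mul' two_pos, oddPart, coeff_contract two_ne_zero, coeff_divX, mul_comm]

lemma eval_eq_evenPart_add_oddPart (P : R[X]) (t : R) :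
    P.eval t = (evenPart P).eval (t ^ 2) + t * (oddPart P).eval (t ^ 2) := by
  conv_lhs => rw [← expand_evenPart_add_X_mul_expand_oddPart P]
  simp only [eval_add, eval_mul, eval_X, expand_eval]

end EvenOdd

lemma eval_add_eval_neg {R : Type*} [CommRing R] (P : R[X]) (t : R) :
    P.eval t + P.eval (-t) = 2 * (evenPart P).eval (t ^ 2) := by
  rw [eval_eq_evenPart_add_oddPart P t, eval_eq_evenPart_add_oddPart P (-t), neg_sq]
  ring

lemma eval_sub_eval_neg {R : Type*} [CommRing R] (P : R[X]) (t : R) :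
    P.eval t - P.eval (-t) = 2 * (t * (oddPart P).eval (t ^ 2)) := by
  rw [eval_eq_evenPart_add_oddPart P t, eval_eq_evenPart_add_oddPart P (-t), neg_sq]
  ring

/-! ### Symmetrization -/

lemma add_ne_zero_of_mul_pos {R : Type*} [Ring R] [LinearOrder R] [IsStrictOrderedRing R]
    {x y : R} (h : 0 < x * y) : x + y ≠ 0 := by
  rcases pos_and_pos_or_neg_and_neg_of_mul_pos h with ⟨hx, hy⟩ | ⟨hx, hy⟩
  · exact (add_pos hx hy).ne'
  · exact (add_neg hx hy).ne

section Mediant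

variable {𝕜 : Type*} [Field 𝕜] [LinearOrder 𝕜] [IsStrictOrderedRing 𝕜]

lemma div_add_nonneg_of_mul_pos {x y : 𝕜} (h : 0 < x * y) : 0 ≤ x / (x + y) := by
  rcases pos_and_pos_or_neg_and_neg_of_mul_pos h with ⟨hx, hy⟩ | ⟨hx, hy⟩
  · exact div_nonneg hx.le (add_pos hx hy).le
  · exact div_nonneg_of_nonpos hx.le (add_neg hx hy).le

lemma mediant_mem_segment {p₁ q₁ p₂ q₂ : 𝕜} (hq : 0 < q₁ * q₂) :
    (p₁ + p₂) / (q₁ + q₂) ∈ segment 𝕜 (p₁ / q₁) (p₂ / q₂) := by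
  have hq₁ : q₁ ≠ 0 := left_ne_zero_of_mul hq.ne'
  have hq₂ : q₂ ≠ 0 := right_ne_zero_of_mul hq.ne'
  have hsum : q₁ + q₂ ≠ 0 := add_ne_zero_of_mul_pos hq
  refine ⟨q₁ / (q₁ + q₂), q₂ / (q₁ + q₂), div_add_nonneg_of_mul_pos hq, ?_, ?_, ?_⟩
  · rw [add_comm]
    exact div_add_nonneg_of_mul_pos (mul_comm q₁ q₂ ▸ hq)
  · rw [← add_div, div_self hsum]
  · simp only [smul_eq_mul]
    field_simp

lemma odd_div_even_mem_segment {P Q : 𝕜[X]} {t : 𝕜} (hQ : 0 < Q.eval t * Q.eval (-t)) :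
    t * ((oddPart P).eval (t ^ 2) / (evenPart Q).eval (t ^ 2)) ∈
      segment 𝕜 (P.eval t / Q.eval t) (-(P.eval (-t) / Q.eval (-t))) := by
  have hmediant := mediant_mem_segment (p₁ := P.eval t) (p₂ := -P.eval (-t)) hQ
  rwa [← sub_eq_add_neg, eval_sub_eval_neg, eval_add_eval_neg,
    mul_div_mul_left _ _ two_ne_zero, mul_div_assoc, neg_div] at hmediant

end Mediant

lemma forall_pos_or_forall_neg_of_ne_zero {X α : Type*} [TopologicalSpace X] [LinearOrder α]
    [TopologicalSpace α] [OrderClosedTopology α] [Zero α] {K : Set X} (hK : IsPreconnected K)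
    {f : X → α} (hf : ContinuousOn f K) (h₀ : ∀ x ∈ K, f x ≠ 0) :
    (∀ x ∈ K, 0 < f x) ∨ ∀ x ∈ K, f x < 0 := by
  by_contra! ⟨⟨x, hx, hfx⟩, y, hy, hfy⟩
  obtain ⟨z, hz, hfz⟩ := hK.intermediate_value hx hy hf ⟨hfx, hfy⟩
  exact h₀ z hz hfz

section Symmetrization

variable {i j : ℕ} {K : Set ℝ} {g : ℝ → ℝ}

lemma IsRatOn.exists_fraction_mul_neg_pos (hg : IsRatOn (2 * i + 1) (2 * j) (-K ∪ K) g)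
    (hK : IsPreconnected K) (h₀ : (0 : ℝ) ∉ K) :
    ∃ P Q : ℝ[X], P.natDegree ≤ 2 * i + 2 ∧ Q.natDegree ≤ 2 * j + 1 ∧
      (∀ t ∈ K, 0 < Q.eval t * Q.eval (-t)) ∧ ∀ t ∈ -K ∪ K, g t = P.eval t / Q.eval t := by
  obtain ⟨P, Q, hP, hQ, hQ₀, hg⟩ := hg
  have hne : ∀ t ∈ K, Q.eval t * Q.eval (-t) ≠ 0 := fun t ht =>
    mul_ne_zero (hQ₀ t (.inr ht)) (hQ₀ (-t) (.inl (Set.neg_mem_neg.mpr ht)))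
  have hcont : Continuous fun t => Q.eval t * Q.eval (-t) :=
    Q.continuous.mul (Q.continuous.comp continuous_neg)
  rcases forall_pos_or_forall_neg_of_ne_zero hK hcont.continuousOn hne with hpos | hneg
  · exact ⟨P, Q, hP.trans (Nat.le_succ _), hQ.trans (Nat.le_succ _), hpos, hg⟩
  · refine ⟨X * P, X * Q, natDegree_X_mul_le_succ hP, natDegree_X_mul_le_succ hQ,
      fun t ht => ?_, fun t ht => ?_⟩
    · have ht₀ : t ≠ 0 := ne_of_mem_of_not_mem ht h₀
      have hprod : (X * Q).eval t * (X * Q).eval (-t) =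
          t ^ 2 * -(Q.eval t * Q.eval (-t)) := by
        simp only [eval_mul, eval_X]
        ring
      rw [hprod]
      exact mul_pos (sq_pos_of_ne_zero ht₀) (neg_pos.mpr (hneg t ht))
    · have ht₀ : t ≠ 0 := by
        rintro rfl
        simp [h₀] at ht
      rw [hg t ht, eval_mul, eval_mul, eval_X, mul_div_mul_left _ _ ht₀]

lemma IsRatOn.exists_odd_mem_segment (hg : IsRatOn (2 * i + 1) (2 * j) (-K ∪ K) g)
    (hK : IsPreconnected K) (h₀ : (0 : ℝ) ∉ K) :
    ∃ f, IsRatOn i j ((fun t => t ^ 2) '' K) f ∧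
      ∀ t ∈ K, t * f (t ^ 2) ∈ segment ℝ (g t) (-g (-t)) := by
  obtain ⟨P, Q, hP, hQ, hpos, hg⟩ := hg.exists_fraction_mul_neg_pos hK h₀
  refine ⟨fun x => (oddPart P).eval x / (evenPart Q).eval x, ⟨oddPart P, evenPart Q,
    natDegree_oddPart_le hP, natDegree_evenPart_le hQ, ?_, fun _ _ => rfl⟩, fun t ht => ?_⟩
  · rintro _ ⟨t, ht, rfl⟩
    have hsum := add_ne_zero_of_mul_pos (hpos t ht)
    rw [eval_add_eval_neg] at hsum
    exact right_ne_zero_of_mul hsum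
  · rw [hg t (.inr ht), hg (-t) (.inl (Set.neg_mem_neg.mpr ht))]
    exact odd_div_even_mem_segment (hpos t ht)

end Symmetrization

/-! ### Best approximation -/

/-- `IsBestRatOn i j e D g`: the function `g` is a best approximation on `D` from the class
`R_{i,j}(D)`, where `e t y` is the error made by the value `y` at the point `t`. The supremum is
taken in `ℝ`, so it is meaningful only for competitors with bounded error. -/
def IsBestRatOn (i j : ℕ) (e : ℝ → ℝ → ℝ) (D : Set ℝ) (g : ℝ → ℝ) : Prop :=
  IsRatOn i j D g ∧ ∀ h : ℝ → ℝ, IsRatOn i j D h →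
    sSup ((fun t => e t (g t)) '' D) ≤ sSup ((fun t => e t (h t)) '' D)

/-- The absolute error of the value `y` as an approximation of the sign of `t`. -/
noncomputable def signError (t y : ℝ) : ℝ := |Real.sign t - y|

/-- The relative error of the value `y` as an approximation of `x ^ (-1/2)`. -/
noncomputable def invSqrtRelError (x y : ℝ) : ℝ := |1 - √x * y|

lemma IsBestRatOn.comp_div_const {i j : ℕ} {e : ℝ → ℝ → ℝ} {D : Set ℝ} {g : ℝ → ℝ}
    (hg : IsBestRatOn i j e D g) {c : ℝ} (hc : c ≠ 0) (he : ∀ t y, e (t / c) y = e t y) :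
    IsBestRatOn i j e ((fun t => t / c) ⁻¹' D) (fun t => g (t / c)) := by
  have image_comp_div (h : ℝ → ℝ) :
      (fun t => e t (h (t / c))) '' ((fun t => t / c) ⁻¹' D) = (fun t => e t (h t)) '' D := by
    have hsurj : Function.Surjective fun t : ℝ => t / c := (Equiv.divRight₀ c hc).surjective
    calc _ = (fun t => e (t / c) (h (t / c))) '' ((fun t => t / c) ⁻¹' D) := by simp only [he]
      _ = _ := by rw [← Set.image_image (fun t => e t (h t)), Set.image_preimage_eq _ hsurj]
  refine ⟨by simpa only [inv_mul_eq_div] using hg.1.comp_const_mul c⁻¹, fun h hh => ?_⟩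
  have hh' : IsRatOn i j D fun t => h (c * t) := by
    simpa only [Set.preimage_preimage, mul_div_cancel_left₀ _ hc, Set.preimage_id'] using
      hh.comp_const_mul c
  calc _ = sSup ((fun t => e t (g t)) '' D) := by rw [image_comp_div g]
    _ ≤ sSup ((fun t => e t (h (c * t))) '' D) := hg.2 _ hh'
    _ = _ := by rw [← image_comp_div]; simp only [mul_div_cancel₀ _ hc]

section SignError

variable {K : Set ℝ}

lemma signError_neg (t y : ℝ) : signError (-t) y = signError t (-y) := by
  rw [signError, signError, Real.sign_neg, ← abs_neg]
  ring_nf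

lemma signError_div_of_pos {c : ℝ} (hc : 0 < c) (t y : ℝ) :
    signError (t / c) y = signError t y := by
  have hsign : Real.sign (t / c) = Real.sign t := by
    rcases lt_trichotomy t 0 with ht | rfl | ht
    · rw [Real.sign_of_neg ht, Real.sign_of_neg (div_neg_of_neg_of_pos ht hc)]
    · rw [zero_div]
    · rw [Real.sign_of_pos ht, Real.sign_of_pos (div_pos ht hc)]
  rw [signError, signError, hsign]

lemma signError_le_max_of_mem_segment {t x y z : ℝ} (hz : z ∈ segment ℝ x y) :
    signError t z ≤ max (signError t x) (signError t y) := by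
  have hdist : signError t = fun w => dist w (Real.sign t) := funext fun w => abs_sub_comm _ w
  have hconv : ConvexOn ℝ Set.univ (signError t) := hdist ▸ convexOn_univ_dist (Real.sign t)
  exact hconv.le_on_segment (Set.mem_univ x) (Set.mem_univ y) hz

lemma signError_odd {t : ℝ} (ht : t ≠ 0) (f : ℝ → ℝ) :
    signError t (t * f (t ^ 2)) = invSqrtRelError (t ^ 2) (f (t ^ 2)) := by
  rw [signError, invSqrtRelError, Real.sqrt_sq_eq_abs]
  rcases lt_or_gt_of_ne ht with ht | ht
  · rw [Real.sign_of_neg ht, abs_of_neg ht, ← abs_neg]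
    ring_nf
  · rw [Real.sign_of_pos ht, abs_of_pos ht]

lemma bddAbove_signError {D : Set ℝ} (hD : IsCompact D) {g : ℝ → ℝ} (hg : ContinuousOn g D) :
    BddAbove ((fun t => signError t (g t)) '' D) := by
  obtain ⟨M, hM⟩ := hD.bddAbove_image hg.abs
  refine ⟨1 + M, ?_⟩
  rintro _ ⟨t, ht, rfl⟩
  have hsign : |Real.sign t| ≤ 1 := by
    rcases Real.sign_apply_eq t with h | h | h <;> norm_num [h]
  exact (abs_sub _ _).trans (add_le_add hsign (hM ⟨t, ht, rfl⟩))

lemma image_sq_neg_union_self (K : Set ℝ) :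
    (fun t : ℝ => t ^ 2) '' (-K ∪ K) = (fun t => t ^ 2) '' K := by
  rw [Set.image_union, ← Set.image_neg_eq_neg, Set.image_image]
  simp only [neg_sq, Set.union_self]

lemma image_signError_odd (h₀ : (0 : ℝ) ∉ K) (f : ℝ → ℝ) :
    (fun t => signError t (t * f (t ^ 2))) '' (-K ∪ K) =
      (fun x => invSqrtRelError x (f x)) '' ((fun t => t ^ 2) '' K) := by
  rw [← image_sq_neg_union_self, Set.image_image]
  refine Set.image_congr fun t ht => signError_odd ?_ f
  rintro rfl
  simp [h₀] at ht

theorem IsBestRatOn.id_mul_comp_sq {i j : ℕ} {s : ℝ → ℝ}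
    (hs : IsBestRatOn i j invSqrtRelError ((fun t => t ^ 2) '' K) s) (hK : IsPreconnected K)
    (hcomp : IsCompact K) (h₀ : (0 : ℝ) ∉ K) :
    IsBestRatOn (2 * i + 1) (2 * j) signError (-K ∪ K) (fun t => t * s (t ^ 2)) := by
  refine ⟨hs.1.id_mul_comp_sq ?_, fun g hg => ?_⟩
  · rw [← image_sq_neg_union_self]
    exact Set.mapsTo_image _ _
  obtain ⟨f, hf, hfg⟩ := hg.exists_odd_mem_segment hK h₀
  have hbdd := bddAbove_signError (hcomp.neg.union hcomp) hg.continuousOn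
  rw [image_signError_odd h₀ s]
  refine (hs.2 f hf).trans (Real.sSup_le ?_ (Real.sSup_nonneg ?_))
  · rintro _ ⟨_, ⟨t, ht, rfl⟩, rfl⟩
    calc invSqrtRelError (t ^ 2) (f (t ^ 2))
      _ = signError t (t * f (t ^ 2)) := (signError_odd (ne_of_mem_of_not_mem ht h₀) f).symm
      _ ≤ max (signError t (g t)) (signError t (-g (-t))) :=
        signError_le_max_of_mem_segment (hfg t ht)
      _ = max (signError t (g t)) (signError (-t) (g (-t))) := by rw [signError_neg]
      _ ≤ sSup ((fun t => signError t (g t)) '' (-K ∪ K)) :=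
        max_le (le_csSup hbdd ⟨t, .inr ht, rfl⟩)
          (le_csSup hbdd ⟨-t, .inl (Set.neg_mem_neg.mpr ht), rfl⟩)
  · rintro _ ⟨t, -, rfl⟩
    exact abs_nonneg _

end SignError

lemma image_pow_Icc {x y : ℝ} (hx : 0 ≤ x) (hxy : x ≤ y) (n : ℕ) :
    (fun t => t ^ n) '' Set.Icc x y = Set.Icc (x ^ n) (y ^ n) :=
  (continuous_pow n).continuousOn.image_Icc_of_monotoneOn hxy fun _ hu _ _ huv =>
    pow_le_pow_left₀ (hx.trans hu.1) huv n

lemma preimage_div_const_Icc_of_pos {𝕜 : Type*} [Field 𝕜] [LinearOrder 𝕜] [IsStrictOrderedRing 𝕜]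
    {c : 𝕜} (hc : 0 < c) (x y : 𝕜) :
    (fun t => t / c) ⁻¹' Set.Icc x y = Set.Icc (x * c) (y * c) :=
  (OrderIso.divRight₀ c hc).preimage_Icc x y

theorem zolotarev_best_sign_approximation_general {a b : ℝ} (ha : 0 < a) (hab : a ≤ b) {i j : ℕ}
    {s : ℝ → ℝ} (hs : IsBestRatOn i j invSqrtRelError (Set.Icc 1 ((b / a) ^ 2)) s) :
    IsBestRatOn (2 * i + 1) (2 * j) signError (Set.Icc (-(b / a)) (-1) ∪ Set.Icc 1 (b / a))
        (fun t => t * s (t ^ 2)) ∧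
      IsBestRatOn (2 * i + 1) (2 * j) signError (Set.Icc (-b) (-a) ∪ Set.Icc a b)
        (fun t => t / a * s ((t / a) ^ 2)) := by
  rw [← one_pow 2, ← image_pow_Icc zero_le_one ((one_le_div ha).mpr hab)] at hs
  have hnormalized := hs.id_mul_comp_sq isPreconnected_Icc isCompact_Icc (by norm_num)
  rw [Set.neg_Icc] at hnormalized
  refine ⟨hnormalized, ?_⟩
  have hscaled := hnormalized.comp_div_const ha.ne' (signError_div_of_pos ha)
  rwa [Set.preimage_union, preimage_div_const_Icc_of_pos ha, preimage_div_const_Icc_of_pos ha,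
    neg_mul, neg_mul, one_mul, div_mul_cancel₀ b ha.ne'] at hscaled

/-- **Zolotarev.** If `s ∈ R_{m-1,m}([1,(b/a)²])` is the best relative
approximation to `t^{-1/2}` on `[1,(b/a)²]` (i.e. it minimizes `max |1 - √t · f(t)|`),
then `r(t) = t·s(t²)` is the best approximation to the sign function on
`D' = [-b/a,-1] ∪ [1,b/a]` from `R_{2m-1,2m}(D')`, and consequently
`t ↦ (t/a)·s((t/a)²)` is the best approximation to the sign function on
`[-b,-a] ∪ [a,b]` from `R_{2m-1,2m}([-b,-a] ∪ [a,b])`. -/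
theorem zolotarev_best_sign_approximation (a b : ℝ) (ha : 0 < a) (hab : a ≤ b)
    (m : ℕ) (hm : 1 ≤ m) (s : ℝ → ℝ)
    (hs : IsRatOn (m - 1) m (Set.Icc 1 ((b / a) ^ 2)) s)
    (hbest : ∀ f : ℝ → ℝ, IsRatOn (m - 1) m (Set.Icc 1 ((b / a) ^ 2)) f →
      sSup ((fun t : ℝ => |1 - Real.sqrt t * s t|) '' Set.Icc 1 ((b / a) ^ 2)) ≤
        sSup ((fun t : ℝ => |1 - Real.sqrt t * f t|) '' Set.Icc 1 ((b / a) ^ 2))) :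
    (IsRatOn (2 * m - 1) (2 * m) (Set.Icc (-(b / a)) (-1) ∪ Set.Icc 1 (b / a))
        (fun t => t * s (t ^ 2)) ∧
      ∀ g : ℝ → ℝ,
        IsRatOn (2 * m - 1) (2 * m) (Set.Icc (-(b / a)) (-1) ∪ Set.Icc 1 (b / a)) g →
        sSup ((fun t : ℝ => |Real.sign t - t * s (t ^ 2)|) ''
            (Set.Icc (-(b / a)) (-1) ∪ Set.Icc 1 (b / a))) ≤
          sSup ((fun t : ℝ => |Real.sign t - g t|) ''
            (Set.Icc (-(b / a)) (-1) ∪ Set.Icc 1 (b / a)))) ∧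
    (IsRatOn (2 * m - 1) (2 * m) (Set.Icc (-b) (-a) ∪ Set.Icc a b)
        (fun t => (t / a) * s ((t / a) ^ 2)) ∧
      ∀ g : ℝ → ℝ,
        IsRatOn (2 * m - 1) (2 * m) (Set.Icc (-b) (-a) ∪ Set.Icc a b) g →
        sSup ((fun t : ℝ => |Real.sign t - (t / a) * s ((t / a) ^ 2)|) ''
            (Set.Icc (-b) (-a) ∪ Set.Icc a b)) ≤
          sSup ((fun t : ℝ => |Real.sign t - g t|) ''
            (Set.Icc (-b) (-a) ∪ Set.Icc a b))) := by
  have hdeg : 2 * (m - 1) + 1 = 2 * m - 1 := by omega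
  exact hdeg ▸ zolotarev_best_sign_approximation_general ha hab ⟨hs, hbest⟩
end

section
/- Let m ≥ 1 be an integer. For all real t such that (t+1)^{2m} + (t−1)^{2m} ≠ 0 (in particular for all t ≠ 0... in fact for all real t), Neuberger's rational function admits the partial fraction expansion ((t+1)^{2m} − (t−1)^{2m}) / ((t+1)^{2m} + (t−1)^{2m}) = Σ_{i=1}^{m} ωᵢ · t/(t² + τᵢ), where ωᵢ = (1/m)·cos^{−2}(π(i − ½)/(2m)) and τᵢ = tan²(π(i − ½)/(2m)). -/
/-!
Put `a = 1 + t` and `b = 1 - t`. The summand with angle `θ` is, up to the factor `1 / m`, the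
Poisson kernel `Re ((a + w) / (a - w))` at `w = b * exp (2 * θ * I)`, and the angles `2 * θ` are the
arguments of the solutions of `z ^ (2 * m) = -1` in the upper half plane. The solutions in the lower
half plane contribute the same by conjugation, so the theorem is one half of the averaging identity
`∑ (a + w) / (a - w) = n * (a ^ n + w₀ ^ n) / (a ^ n - w₀ ^ n)`, `w` running over the rotations of
`w₀` by the `n`-th roots of unity. That identity comes from the logarithmic derivative of
`X ^ n - w₀ ^ n`, evaluated at `a`, because `(a + w) / (a - w) = 2 * a / (a - w) - 1`.
-/

open Finset

section RootsOfUnity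

variable {K : Type*} [Field K] {n : ℕ} {ζ w z : K}

theorem sum_one_div_sub_rootsOfUnity_mul (hζ : IsPrimitiveRoot ζ n) (h : z ^ n ≠ w ^ n) :
    ∑ j ∈ range n, 1 / (z - ζ ^ j * w) = n * z ^ (n - 1) / (z ^ n - w ^ n) := by
  have hroots : (.X ^ n - .C (w ^ n) : Polynomial K).roots =
      (Multiset.range n).map (ζ ^ · * w) := hζ.nthRoots_eq rfl
  have hsplits : (.X ^ n - .C (w ^ n) : Polynomial K).Splits :=
    X_pow_sub_C_splits_of_isPrimitiveRoot hζ rfl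
  have hlogDeriv := hsplits.eval_derivative_div_eval_of_ne_zero (x := z)
    (by simpa [sub_eq_zero] using h)
  rw [hroots, Multiset.map_map] at hlogDeriv
  -- `map_pow` would hide the constant `C (w ^ n)` from `derivative_C`
  simpa [sum_eq_multiset_sum, Polynomial.derivative_X_pow, -map_pow] using hlogDeriv.symm

theorem sum_add_div_sub_rootsOfUnity_mul (hζ : IsPrimitiveRoot ζ n) (h : z ^ n ≠ w ^ n) :
    ∑ j ∈ range n, (z + ζ ^ j * w) / (z - ζ ^ j * w) = n * ((z ^ n + w ^ n) / (z ^ n - w ^ n)) := by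
  have hterm (j : ℕ) : (z + ζ ^ j * w) / (z - ζ ^ j * w) = 2 * z * (1 / (z - ζ ^ j * w)) - 1 := by
    have hne : z - ζ ^ j * w ≠ 0 := by
      contrapose! h
      rw [sub_eq_zero.mp h, mul_pow, pow_right_comm, hζ.pow_eq_one, one_pow, one_mul]
    field_simp
    ring
  have hn : n ≠ 0 := by
    rintro rfl
    simp at h
  have hden : z ^ n - w ^ n ≠ 0 := sub_ne_zero.mpr h
  calc ∑ j ∈ range n, (z + ζ ^ j * w) / (z - ζ ^ j * w)
      = 2 * z * (n * z ^ (n - 1) / (z ^ n - w ^ n)) - n := by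
        simp [hterm, ← mul_sum, ← sum_one_div_sub_rootsOfUnity_mul hζ h]
    _ = n * ((z ^ n + w ^ n) / (z ^ n - w ^ n)) := by
        field_simp
        linear_combination 2 * n * mul_pow_sub_one hn z

end RootsOfUnity

section PoissonKernel

theorem poissonKernel_zero_left (w z : ℂ) : poissonKernel 0 w z = ((z + w) / (z - w)).re := by
  simp [poissonKernel_eq_re_herglotzRieszKernel, herglotzRieszKernel_def]

theorem sum_poissonKernel_rootsOfUnity_mul {n : ℕ} {ζ : ℂ} (hζ : IsPrimitiveRoot ζ n) (w z : ℂ) :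
    ∑ j ∈ range n, poissonKernel 0 (ζ ^ j * w) z = n * poissonKernel 0 (w ^ n) (z ^ n) := by
  rcases eq_or_ne (z ^ n) (w ^ n) with h | h
  -- Some rotation of `w` hits the pole `z`, but all numerators vanish, and `0 / 0 = 0`.
  · rcases eq_or_ne n 0 with rfl | hn
    · simp
    have hnorm : ‖z‖ = ‖w‖ := by
      rw [← pow_left_inj₀ (norm_nonneg z) (norm_nonneg w) hn, ← norm_pow, ← norm_pow, h]
    simp [poissonKernel_def, hζ.norm'_eq_one hn, hnorm]
  · simp only [poissonKernel_zero_left, ← Complex.re_sum, sum_add_div_sub_rootsOfUnity_mul hζ h,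
      ← Complex.ofReal_natCast, Complex.re_ofReal_mul]

theorem poissonKernel_zero_ofReal (a b : ℝ) : poissonKernel 0 (b : ℂ) a = (a + b) / (a - b) := by
  rw [poissonKernel_zero_left]
  norm_cast

theorem poissonKernel_zero_ofReal_mul_exp (a b φ : ℝ) :
    poissonKernel 0 (b * Complex.exp (φ * Complex.I)) a =
      (a ^ 2 - b ^ 2) / (a ^ 2 + b ^ 2 - 2 * a * b * Real.cos φ) := by
  have hden : ‖(a : ℂ) - b * Complex.exp (φ * Complex.I)‖ ^ 2 =
      a ^ 2 + b ^ 2 - 2 * a * b * Real.cos φ := by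
    rw [Complex.sq_norm, Complex.normSq_sub]
    simp [Complex.normSq_eq_norm_sq, Complex.exp_ofReal_mul_I_re]
    ring
  simp [poissonKernel_def, hden]

theorem poissonKernel_one_sub_mul_exp_one_add {t θ : ℝ} (hθ : Real.cos θ ≠ 0) :
    poissonKernel 0 ((1 - t : ℝ) * Complex.exp ((2 * θ : ℝ) * Complex.I)) (1 + t : ℝ) =
      (Real.cos θ)⁻¹ ^ 2 * (t / (t ^ 2 + Real.tan θ ^ 2)) := by
  have hden : (1 + t) ^ 2 + (1 - t) ^ 2 - 2 * (1 + t) * (1 - t) * Real.cos (2 * θ) =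
      4 * (Real.cos θ ^ 2 * (t ^ 2 + Real.tan θ ^ 2)) := by
    rw [Real.cos_two_mul, Real.tan_eq_sin_div_cos]
    field_simp
    linear_combination (-4) * Real.sin_sq_add_cos_sq θ
  have hnum : (1 + t) ^ 2 - (1 - t) ^ 2 = 4 * t := by ring
  rw [poissonKernel_zero_ofReal_mul_exp, hden, hnum, mul_div_mul_left _ _ four_ne_zero, inv_pow,
    inv_mul_eq_div, div_div, mul_comm (t ^ 2 + _)]

end PoissonKernel

theorem sum_range_two_mul_of_reflect {M : Type*} [AddCommMonoid M] {m : ℕ} {f : ℕ → M}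
    (hf : ∀ j < m, f (2 * m - 1 - j) = f j) :
    ∑ j ∈ range (2 * m), f j = 2 • ∑ j ∈ range m, f j := by
  rw [two_mul, sum_range_add, two_nsmul, ← sum_range_reflect (fun j ↦ f (m + j))]
  congr 1
  refine sum_congr rfl fun j hj ↦ ?_
  have hj := mem_range.mp hj
  rw [← hf j hj]
  congr 1
  lia

theorem sum_poissonKernel_roots_neg_one {n : ℕ} (hn : n ≠ 0) (a b : ℝ) :
    ∑ j ∈ range n,
        poissonKernel 0 (b * Complex.exp ((Real.pi * (2 * j + 1) / n : ℝ) * Complex.I)) a =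
      n * ((a ^ n - b ^ n) / (a ^ n + b ^ n)) := by
  have hn' : (n : ℂ) ≠ 0 := mod_cast hn
  have hpow : (b * Complex.exp (Real.pi * Complex.I / n)) ^ n = ((-b ^ n : ℝ) : ℂ) := by
    rw [mul_pow, ← Complex.exp_nat_mul, mul_div_cancel₀ _ hn', Complex.exp_pi_mul_I]
    simp
  have hrot (j : ℕ) : b * Complex.exp ((Real.pi * (2 * j + 1) / n : ℝ) * Complex.I) =
      Complex.exp (2 * Real.pi * Complex.I / n) ^ j *
        (b * Complex.exp (Real.pi * Complex.I / n)) := by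
    rw [mul_left_comm, ← Complex.exp_nat_mul, ← Complex.exp_add]
    push_cast
    ring_nf
  simp only [hrot]
  rw [sum_poissonKernel_rootsOfUnity_mul (Complex.isPrimitiveRoot_exp n hn), hpow,
    ← Complex.ofReal_pow, poissonKernel_zero_ofReal, sub_neg_eq_add, ← sub_eq_add_neg]

theorem sum_poissonKernel_upper_roots_neg_one {m : ℕ} (hm : m ≠ 0) (a b : ℝ) :
    ∑ j ∈ range m, poissonKernel 0
        (b * Complex.exp ((Real.pi * (2 * j + 1) / (2 * m) : ℝ) * Complex.I)) a =
      m * ((a ^ (2 * m) - b ^ (2 * m)) / (a ^ (2 * m) + b ^ (2 * m))) := by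
  have hcos (j : ℕ) (hj : j < m) :
      Real.cos (Real.pi * (2 * (2 * m - 1 - j : ℕ) + 1) / (2 * m)) =
        Real.cos (Real.pi * (2 * j + 1) / (2 * m)) := by
    rw [← Real.cos_two_pi_sub, Nat.cast_sub (by lia), Nat.cast_sub (by lia)]
    congr 1
    push_cast
    field_simp
    ring
  have hfull := sum_poissonKernel_roots_neg_one (n := 2 * m) (by lia) a b
  simp only [Nat.cast_mul, Nat.cast_ofNat] at hfull
  rw [sum_range_two_mul_of_reflect fun j hj ↦ by
    simp only [poissonKernel_zero_ofReal_mul_exp, hcos j hj], two_nsmul] at hfull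
  linarith

theorem cos_pi_mul_add_half_div_pos {m j : ℕ} (hj : j < m) :
    0 < Real.cos (Real.pi * (j + 1 - 1 / 2) / (2 * m)) := by
  have hj' : (j : ℝ) + 1 ≤ m := mod_cast hj
  have hm : (0 : ℝ) < 2 * m := by linarith [j.cast_nonneg (α := ℝ)]
  have hhalf : (0 : ℝ) < j + 1 - 1 / 2 := by linarith [j.cast_nonneg (α := ℝ)]
  have hpos : 0 < Real.pi * (j + 1 - 1 / 2) / (2 * m) := by positivity
  have hlt : Real.pi * (j + 1 - 1 / 2) / (2 * m) < Real.pi / 2 := by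
    rw [div_lt_iff₀ hm]
    nlinarith [Real.pi_pos]
  exact Real.cos_pos_of_mem_Ioo ⟨by linarith [Real.pi_pos], hlt⟩

/-- Partial fraction expansion of Neuberger's rational approximation to
the sign function: for every integer `m ≥ 1` and every real `t`,
`((t+1)^{2m} - (t-1)^{2m}) / ((t+1)^{2m} + (t-1)^{2m}) = ∑_{i=1}^m ωᵢ t/(t² + τᵢ)` with
`ωᵢ = (1/m)·cos⁻²(π(i - ½)/(2m))` and `τᵢ = tan²(π(i - ½)/(2m))`. -/
theorem neuberger_partial_fraction_expansion (m : ℕ) (hm : 1 ≤ m) (t : ℝ) :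
    ((t + 1) ^ (2 * m) - (t - 1) ^ (2 * m)) /
        ((t + 1) ^ (2 * m) + (t - 1) ^ (2 * m)) =
      ∑ i : Fin m,
        (1 / (m : ℝ) * (Real.cos (Real.pi * ((i : ℝ) + 1 - 1 / 2) / (2 * m)))⁻¹ ^ 2) *
          (t / (t ^ 2 + Real.tan (Real.pi * ((i : ℝ) + 1 - 1 / 2) / (2 * m)) ^ 2)) := by
  have hm' : (m : ℝ) ≠ 0 := mod_cast (by lia : m ≠ 0)
  calc
    _ = 1 / m * ∑ j ∈ range m, poissonKernel 0 ((1 - t : ℝ) *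
          Complex.exp ((Real.pi * (2 * j + 1) / (2 * m) : ℝ) * Complex.I)) (1 + t : ℝ) := by
      rw [sum_poissonKernel_upper_roots_neg_one (by lia), one_div, inv_mul_cancel_left₀ hm',
        ← neg_sub t 1, (even_two_mul m).neg_pow, add_comm 1 t]
    _ = _ := by
      rw [sum_range, mul_sum]
      refine sum_congr rfl fun i _ ↦ ?_
      have hangle : Real.pi * (2 * (i : ℕ) + 1) / (2 * m) =
          2 * (Real.pi * ((i : ℝ) + 1 - 1 / 2) / (2 * m)) := by ring
      rw [hangle, poissonKernel_one_sub_mul_exp_one_add (cos_pi_mul_add_half_div_pos i.is_lt).ne',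
        mul_assoc]
end

section
/- Let m ≥ 1 be an integer and define Neuberger's rational function r(t) = ((t+1)^{2m} − (t−1)^{2m}) / ((t+1)^{2m} + (t−1)^{2m}) for t ∈ ℝ. Then: (i) r(1) = 1 and r(−1) = −1, i.e. r is exact for |t| = 1; (ii) r(1/t) = r(t) for all t ≠ 0; (iii) the error 1 − r(t) is nonnegative for t ≥ 1 and is monotonically increasing as a function of t on [1, ∞). -/
/-! For `1 ≤ s ≤ t` we have `0 ≤ (s - 1) * (t + 1) ≤ (t - 1) * (s + 1)`; the `n`-th power of this
inequality is the cross-multiplied form of `r(t) ≤ r(s)`. The symmetry under `t ↦ 1/t` comes from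
dividing numerator and denominator by `t ^ n`, the sign of `1 - t` being absorbed by the even
exponent. -/

section Neuberger

variable {K : Type*} [Field K]

/-- Neuberger's rational approximation of the sign function. The function of order `m`
in the literature is the case `n = 2 * m`. -/
def neuberger (n : ℕ) (t : K) : K :=
  ((t + 1) ^ n - (t - 1) ^ n) / ((t + 1) ^ n + (t - 1) ^ n)

lemma neuberger_one [NeZero (2 : K)] {n : ℕ} (hn : n ≠ 0) : neuberger n (1 : K) = 1 := by
  have h2 : (1 + 1 : K) ^ n ≠ 0 := pow_ne_zero n (one_add_one_eq_two (R := K) ▸ two_ne_zero)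
  rw [neuberger, sub_self, zero_pow hn, sub_zero, add_zero, div_self h2]

lemma neuberger_neg (n : ℕ) (t : K) : neuberger n (-t) = -neuberger n t := by
  have hadd : (-t + 1) ^ n = (-1) ^ n * (t - 1) ^ n := by rw [← neg_pow, neg_sub', sub_neg_eq_add]
  have hsub : (-t - 1) ^ n = (-1) ^ n * (t + 1) ^ n := by rw [← neg_pow, neg_add']
  have hsign : (-1 : K) ^ n ≠ 0 := pow_ne_zero n (neg_ne_zero.mpr one_ne_zero)
  rw [neuberger, neuberger, hadd, hsub, ← mul_sub, ← mul_add, mul_div_mul_left _ _ hsign,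
    ← neg_div, neg_sub, add_comm ((t + 1) ^ n)]

lemma neuberger_inv {n : ℕ} (hn : Even n) {t : K} (ht : t ≠ 0) :
    neuberger n t⁻¹ = neuberger n t := by
  have hadd : (t⁻¹ + 1) ^ n = (t + 1) ^ n / t ^ n := by
    rw [← div_pow, add_div, div_self ht, one_div, add_comm]
  have hsub : (t⁻¹ - 1) ^ n = (t - 1) ^ n / t ^ n := by
    rw [← div_pow, sub_div, div_self ht, one_div, ← neg_sub, hn.neg_pow]
  rw [neuberger, neuberger, hadd, hsub, ← sub_div, ← add_div,
    div_div_div_cancel_right₀ (pow_ne_zero n ht)]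

variable [LinearOrder K] [IsStrictOrderedRing K]

lemma neuberger_le_one {n : ℕ} (hn : Even n) (t : K) : neuberger n t ≤ 1 := by
  have hadd : 0 ≤ (t + 1) ^ n := hn.pow_nonneg _
  have hsub : 0 ≤ (t - 1) ^ n := hn.pow_nonneg _
  exact div_le_one_of_le₀ (by linarith) (add_nonneg hadd hsub)

lemma antitoneOn_neuberger (n : ℕ) : AntitoneOn (neuberger n : K → K) (Set.Ici 1) := by
  have denom_pos {x : K} (hx : 1 ≤ x) : 0 < (x + 1) ^ n + (x - 1) ^ n :=
    add_pos_of_pos_of_nonneg (pow_pos (by linarith) n) (pow_nonneg (sub_nonneg.mpr hx) n)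
  intro s (hs : 1 ≤ s) t (ht : 1 ≤ t) hst
  have hcross : (s - 1) ^ n * (t + 1) ^ n ≤ (t - 1) ^ n * (s + 1) ^ n := by
    rw [← mul_pow, ← mul_pow]
    exact pow_le_pow_left₀ (mul_nonneg (by linarith) (by linarith)) (by linarith) n
  rw [neuberger, neuberger, div_le_div_iff₀ (denom_pos ht) (denom_pos hs)]
  linarith

theorem neuberger_rational_properties_general {n : ℕ} (hn : Even n) (hn₀ : n ≠ 0) :
    (neuberger n (1 : K) = 1 ∧ neuberger n (-1 : K) = -1) ∧
      (∀ t : K, t ≠ 0 → neuberger n (1 / t) = neuberger n t) ∧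
      ((∀ t : K, 0 ≤ 1 - neuberger n t) ∧
        MonotoneOn (fun t : K => 1 - neuberger n t) (Set.Ici 1)) := by
  refine ⟨⟨neuberger_one hn₀, ?_⟩, fun t ht => ?_, fun t => ?_, fun s hs t ht hst => ?_⟩
  · rw [neuberger_neg, neuberger_one hn₀]
  · rw [one_div, neuberger_inv hn ht]
  · exact sub_nonneg.mpr (neuberger_le_one hn t)
  · exact sub_le_sub_left (antitoneOn_neuberger n hs ht hst) 1

end Neuberger

/-- Properties of Neuberger's rational function
`r(t) = ((t+1)^{2m} - (t-1)^{2m}) / ((t+1)^{2m} + (t-1)^{2m})`: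
(i) `r(1) = 1` and `r(-1) = -1`; (ii) `r(1/t) = r(t)` for `t ≠ 0`;
(iii) the error `1 - r(t)` is nonnegative for `t ≥ 1` and monotonically increasing
on `[1, ∞)`. -/
theorem neuberger_rational_properties (m : ℕ) (hm : 1 ≤ m) (r : ℝ → ℝ)
    (hr : ∀ t : ℝ, r t = ((t + 1) ^ (2 * m) - (t - 1) ^ (2 * m)) /
      ((t + 1) ^ (2 * m) + (t - 1) ^ (2 * m))) :
    (r 1 = 1 ∧ r (-1) = -1) ∧
      (∀ t : ℝ, t ≠ 0 → r (1 / t) = r t) ∧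
      ((∀ t : ℝ, 1 ≤ t → 0 ≤ 1 - r t) ∧
        MonotoneOn (fun t => 1 - r t) (Set.Ici (1 : ℝ))) := by
  obtain ⟨hone, hinv, hnonneg, hmono⟩ :=
    neuberger_rational_properties_general (K := ℝ) (even_two_mul m) (by lia)
  exact (funext hr : r = neuberger (2 * m)) ▸ ⟨hone, hinv, fun t _ => hnonneg t, hmono⟩
end

section
/- Let 0 < a < b, let κ = b/a, let ε ∈ (0, 2), and let m be a positive integer satisfying m ≥ (1/2)·log(ε/(4−ε)) / log((√κ − 1)/(√κ + 1)). Then Neuberger's rational function r(t) = ((t+1)^{2m} − (t−1)^{2m}) / ((t+1)^{2m} + (t−1)^{2m}) satisfies |sign(t) − r(t)| ≤ ε/2 for all t in the scaled domain [−√κ, −1/√κ] ∪ [1/√κ, √κ] (which is the image of [−b, −a] ∪ [a, b] under scaling by the factor (ab)^{−1/2}). -/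
/-!
The Cayley transform `q(t) = (t - 1) / (t + 1)` turns Neuberger's function into
`r = (1 - q ^ (2m)) / (1 + q ^ (2m))`, so `1 - r = 2 q ^ (2m) / (1 + q ^ (2m))`. Since `q` increases
on `(0, ∞)` and `q(1/t) = -q(t)`, on `[1/s, s]` we have `|q| ≤ q(s)`, which bounds the error for
positive `t`; negative `t` follow because `r` is odd. With `s = √κ`, the lower bound on `m` says
that `2m` is at least the logarithm of `ε / (4 - ε)` to the base `q(√κ) < 1`.
-/

section OrderedField

variable {K : Type*} [Field K]

/-- Neuberger's rational approximation to the sign function. The parameter `m` is half the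
exponent, as in the paper. -/
def neubergerRational (m : ℕ) (t : K) : K :=
  ((t + 1) ^ (2 * m) - (t - 1) ^ (2 * m)) / ((t + 1) ^ (2 * m) + (t - 1) ^ (2 * m))

theorem neubergerRational_neg (m : ℕ) (t : K) :
    neubergerRational m (-t) = -neubergerRational m t := by
  have add_one : (-t + 1) ^ (2 * m) = (t - 1) ^ (2 * m) := by
    rw [← (even_two_mul m).neg_pow (t - 1), neg_sub', sub_neg_eq_add]
  have sub_one : (-t - 1) ^ (2 * m) = (t + 1) ^ (2 * m) := by
    rw [← (even_two_mul m).neg_pow (t + 1), neg_add']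
  rw [neubergerRational, neubergerRational, add_one, sub_one, ← neg_div, neg_sub,
    add_comm ((t - 1) ^ (2 * m))]

variable [LinearOrder K] [IsStrictOrderedRing K]

theorem one_sub_neubergerRational (m : ℕ) {t : K} (ht : t ≠ -1) :
    1 - neubergerRational m t =
      2 * ((t - 1) / (t + 1)) ^ (2 * m) / (1 + ((t - 1) / (t + 1)) ^ (2 * m)) := by
  have hnum : 0 < (t + 1) ^ (2 * m) :=
    (even_two_mul m).pow_pos fun h => ht (eq_neg_of_add_eq_zero_left h)
  have hden : 0 < (t + 1) ^ (2 * m) + (t - 1) ^ (2 * m) :=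
    add_pos_of_pos_of_nonneg hnum ((even_two_mul m).pow_nonneg _)
  rw [neubergerRational, div_pow]
  field_simp
  ring

theorem abs_sub_one_div_add_one_le {s t : K} (hs : 0 < s) (ht : t ∈ Set.Icc s⁻¹ s) :
    |(t - 1) / (t + 1)| ≤ (s - 1) / (s + 1) := by
  have ht₀ : 0 < t := (inv_pos.mpr hs).trans_le ht.1
  have hts : 1 ≤ t * s := (inv_le_iff_one_le_mul₀ hs).mp ht.1
  rw [abs_le, ← neg_div, div_le_div_iff₀ (by positivity) (by positivity),
    div_le_div_iff₀ (by positivity) (by positivity)]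
  constructor <;> linarith [ht.2]

theorem monotoneOn_two_mul_div_one_add :
    MonotoneOn (fun y : K => 2 * y / (1 + y)) (Set.Ioi (-1)) := by
  intro y hy z hz hyz
  rw [Set.mem_Ioi] at hy hz
  change 2 * y / (1 + y) ≤ 2 * z / (1 + z)
  rw [div_le_div_iff₀ (by linarith) (by linarith)]
  linarith

theorem two_mul_div_one_add_le_half_iff {y ε : K} (hy : -1 < y) (hε : ε < 4) :
    2 * y / (1 + y) ≤ ε / 2 ↔ y ≤ ε / (4 - ε) := by
  rw [div_le_div_iff₀ (by linarith) two_pos, le_div_iff₀ (sub_pos.mpr hε)]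
  constructor <;> intro h <;> linarith

theorem abs_one_sub_neubergerRational_le (m : ℕ) {s t : K} (hs : 0 < s)
    (ht : t ∈ Set.Icc s⁻¹ s) :
    |1 - neubergerRational m t| ≤
      2 * ((s - 1) / (s + 1)) ^ (2 * m) / (1 + ((s - 1) / (s + 1)) ^ (2 * m)) := by
  have ht₀ : 0 < t := (inv_pos.mpr hs).trans_le ht.1
  have hq₀ : 0 ≤ ((t - 1) / (t + 1)) ^ (2 * m) := (even_two_mul m).pow_nonneg _
  have hq : ((t - 1) / (t + 1)) ^ (2 * m) ≤ ((s - 1) / (s + 1)) ^ (2 * m) := by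
    rw [← (even_two_mul m).pow_abs]
    exact pow_le_pow_left₀ (abs_nonneg _) (abs_sub_one_div_add_one_le hs ht) _
  rw [one_sub_neubergerRational m (by linarith), abs_of_nonneg (by positivity)]
  have hq_mem : ((t - 1) / (t + 1)) ^ (2 * m) ∈ Set.Ioi (-1) := neg_one_lt_zero.trans_le hq₀
  exact monotoneOn_two_mul_div_one_add hq_mem (hq_mem.trans_le hq) hq

end OrderedField

theorem abs_sign_sub_neubergerRational_neg (m : ℕ) (t : ℝ) :
    |Real.sign (-t) - neubergerRational m (-t)| = |Real.sign t - neubergerRational m t| := by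
  rw [Real.sign_neg, neubergerRational_neg, neg_sub_neg, abs_sub_comm]

theorem abs_sign_sub_neubergerRational_le (m : ℕ) {s t : ℝ} (hs : 0 < s)
    (ht : t ∈ Set.Icc (-s) (-s⁻¹) ∪ Set.Icc s⁻¹ s) :
    |Real.sign t - neubergerRational m t| ≤
      2 * ((s - 1) / (s + 1)) ^ (2 * m) / (1 + ((s - 1) / (s + 1)) ^ (2 * m)) := by
  have hs_inv : 0 < s⁻¹ := inv_pos.mpr hs
  rcases ht with hneg | hpos
  · have hneg' : -t ∈ Set.Icc s⁻¹ s := ⟨le_neg_of_le_neg hneg.2, neg_le_of_neg_le hneg.1⟩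
    rw [← abs_sign_sub_neubergerRational_neg, Real.sign_of_pos (hs_inv.trans_le hneg'.1)]
    exact abs_one_sub_neubergerRational_le m hs hneg'
  · rw [Real.sign_of_pos (hs_inv.trans_le hpos.1)]
    exact abs_one_sub_neubergerRational_le m hs hpos

theorem pow_le_of_logb_le {x y : ℝ} {n : ℕ} (hx₀ : 0 < x) (hx₁ : x < 1) (hy : 0 < y)
    (h : Real.logb x y ≤ n) : x ^ n ≤ y := by
  rw [← Real.rpow_natCast]
  exact (Real.logb_le_iff_le_rpow_of_base_lt_one hx₀ hx₁ hy).mp h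

/-- Accuracy of Neuberger's rational approximation: for `0 < a < b`,
`κ = b/a`, `ε ∈ (0,2)` and a positive integer `m` with
`m ≥ (1/2)·log(ε/(4-ε)) / log((√κ-1)/(√κ+1))`, the rational function
`r(t) = ((t+1)^{2m} - (t-1)^{2m}) / ((t+1)^{2m} + (t-1)^{2m})` satisfies
`|sign(t) - r(t)| ≤ ε/2` on the scaled domain `[-√κ, -1/√κ] ∪ [1/√κ, √κ]`. -/
theorem neuberger_accuracy_bound (a b : ℝ) (ha : 0 < a) (hab : a < b)
    (κ : ℝ) (hκ : κ = b / a)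
    (ε : ℝ) (hε : 0 < ε) (hε2 : ε < 2) (m : ℕ) (hm : 0 < m)
    (hmbound : (m : ℝ) ≥
      1 / 2 * Real.log (ε / (4 - ε)) / Real.log ((Real.sqrt κ - 1) / (Real.sqrt κ + 1)))
    (t : ℝ)
    (ht : t ∈ Set.Icc (-Real.sqrt κ) (-(Real.sqrt κ)⁻¹) ∪
      Set.Icc (Real.sqrt κ)⁻¹ (Real.sqrt κ)) :
    |Real.sign t - ((t + 1) ^ (2 * m) - (t - 1) ^ (2 * m)) /
        ((t + 1) ^ (2 * m) + (t - 1) ^ (2 * m))| ≤ ε / 2 := by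
  have hs : 1 < √κ := by
    rw [Real.lt_sqrt zero_le_one, one_pow, hκ]
    exact (one_lt_div ha).mpr hab
  have hx₀ : 0 < (√κ - 1) / (√κ + 1) := div_pos (by linarith) (by linarith)
  have hx₁ : (√κ - 1) / (√κ + 1) < 1 := (div_lt_one (by linarith)).mpr (by linarith)
  have hlogb : Real.logb ((√κ - 1) / (√κ + 1)) (ε / (4 - ε)) ≤ (2 * m : ℕ) := by
    rw [ge_iff_le, mul_div_assoc, Real.log_div_log] at hmbound
    push_cast
    linarith
  have hpow : ((√κ - 1) / (√κ + 1)) ^ (2 * m) ≤ ε / (4 - ε) :=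
    pow_le_of_logb_le hx₀ hx₁ (div_pos hε (by linarith)) hlogb
  have hpow₀ : 0 < ((√κ - 1) / (√κ + 1)) ^ (2 * m) := pow_pos hx₀ _
  exact (abs_sign_sub_neubergerRational_le m (by linarith) ht).trans
    ((two_mul_div_one_add_le_half_iff (by linarith) (by linarith)).mpr hpow)
end
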